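/- For every m ∈ S and j ≥ 0, the dimension over k of the reduced homology H̃_j(∇_m) equals the multigraded Betti number dim_k (N_j)_m/(𝔪 N_j)_m, where N_j is the j-th syzygy module in the minimal S-graded free resolution of k[S] over R (N_0 = I_S). -/

import Mathlib

open MvPolynomial

section SimplicialHomology

variable (k : Type) [Field k] {V : Type} [LinearOrder V]

/-- The (reduced) simplicial boundary operator on formal `k`-linear combinations of finite
subsets of the (linearly ordered) vertex set `V`, with the usual alternating signs. -/
noncomputable def sBoundary : (Finset V →₀ k) →ₗ[k] (Finset V →₀ k) :=
  Finsupp.lsum k fun F =>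
    LinearMap.toSpanSingleton k _
      (∑ x ∈ F, ((-1 : k) ^ (F.filter (fun y => y < x)).card) •
        Finsupp.single (F.erase x) (1 : k))

/-- The faces of cardinality `c` of the simplicial complex `K` (the empty face is always
included, so that the chain complex below computes *reduced* homology). -/
def sFaces (K : Set (Finset V)) (c : ℕ) : Set (Finset V) :=
  {F | F.card = c ∧ (F = ∅ ∨ F ∈ K)}

/-- The reduced `j`-cycles `Z̃_j(K)`: chains supported on the `j`-dimensional faces
(of cardinality `j+1`) killed by the boundary operator. -/
noncomputable def sCycles (K : Set (Finset V)) (j : ℕ) : Submodule k (Finset V →₀ k) :=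
  Finsupp.supported k k (sFaces K (j + 1)) ⊓ LinearMap.ker (sBoundary k)

/-- The reduced `j`-boundaries `B̃_j(K)`: images under the boundary operator of chains
supported on the `(j+1)`-dimensional faces (of cardinality `j+2`). -/
noncomputable def sBoundaries (K : Set (Finset V)) (j : ℕ) : Submodule k (Finset V →₀ k) :=
  Submodule.map (sBoundary k) (Finsupp.supported k k (sFaces K (j + 2)))

/-- The reduced `j`-th simplicial homology `H̃_j(K) = Z̃_j(K)/B̃_j(K)` of `K` with
coefficients in `k`, realized as the image of the cycles in the quotient of the chain
space by the boundaries. -/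
noncomputable def sHred (K : Set (Finset V)) (j : ℕ) :
    Submodule k ((Finset V →₀ k) ⧸ sBoundaries k K j) :=
  Submodule.map (sBoundaries k K j).mkQ (sCycles k K j)

end SimplicialHomology

/-- The simplicial complex `∇_m` on the vertex set `C_m ⊆ ℕ^r` (with the lexicographic
linear order on vertices). -/
def nablaLex {G : Type} [AddCommGroup G] {r : ℕ} (n : Fin r → G) (m : G) :
    Set (Finset (Lex (Fin r →₀ ℕ))) :=
  {F | F.Nonempty ∧ (∀ a ∈ F, ((ofLex a).sum fun i e => e • n i) = m) ∧
    ∃ i, ∀ a ∈ F, 0 < ofLex a i}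

/-- The `S`-degree-`m` graded piece of a free module `R^c` with degree shifts `d`. -/
noncomputable def shiftedPiece {G : Type} [AddCommGroup G] (k : Type) [Field k]
    {r c : ℕ} (n : Fin r → G) (d : Fin c → G) (m : G) :
    Submodule k (Fin c → MvPolynomial (Fin r) k) :=
  Submodule.pi Set.univ fun i => weightedHomogeneousSubmodule k n (m - d i)

/-- The multigraded Betti number `dim_k (N)_m/(𝔪N)_m` of a graded submodule
`N ⊆ R^c` (with degree shifts `d`) in `S`-degree `m`. -/
noncomputable def multigradedBetti {G : Type} [AddCommGroup G] (k : Type) [Field k]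
    {r c : ℕ} (n : Fin r → G) (d : Fin c → G) (m : G)
    (N : Submodule (MvPolynomial (Fin r) k) (Fin c → MvPolynomial (Fin r) k)) : ℕ :=
  Module.finrank k ↥(Submodule.map
    (((Ideal.span (Set.range (X : Fin r → MvPolynomial (Fin r) k)) • N).restrictScalars k ⊓
        shiftedPiece k n d m).mkQ)
    (N.restrictScalars k ⊓ shiftedPiece k n d m))


/-- Two subquotients related by mutually inverse (modulo the denominators) maps have the
same dimension. -/
theorem finrank_subquot_eq {k X Y : Type} [Field k] [AddCommGroup X] [Module k X]
    [AddCommGroup Y] [Module k Y] (V W : Submodule k X) (V' W' : Submodule k Y)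
    (f : X →ₗ[k] Y) (g : Y →ₗ[k] X)
    (hf : ∀ v ∈ V, f v ∈ V') (hg : ∀ v ∈ V', g v ∈ V)
    (hfW : ∀ v ∈ W, f v ∈ W') (hgW : ∀ v ∈ W', g v ∈ W)
    (hgf : ∀ v ∈ V, g (f v) - v ∈ W) (hfg : ∀ v ∈ V', f (g v) - v ∈ W') :
    Module.finrank k ↥(Submodule.map W.mkQ V) = Module.finrank k ↥(Submodule.map W'.mkQ V') := by
  let F : (X ⧸ W) →ₗ[k] (Y ⧸ W') := W.mapQ W' f hfW
  let Gm : (Y ⧸ W') →ₗ[k] (X ⧸ W) := W'.mapQ W g hgW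
  have hF : ∀ x ∈ Submodule.map W.mkQ V, F x ∈ Submodule.map W'.mkQ V' := by
    rintro _ ⟨v, hv, rfl⟩
    exact ⟨f v, hf v hv, by simp [F]⟩
  have hG : ∀ x ∈ Submodule.map W'.mkQ V', Gm x ∈ Submodule.map W.mkQ V := by
    rintro _ ⟨v, hv, rfl⟩
    exact ⟨g v, hg v hv, by simp [Gm]⟩
  refine LinearEquiv.finrank_eq (LinearEquiv.ofLinearMap (F.restrict hF) (Gm.restrict hG) ?_ ?_)
  · ext ⟨_, v, hv, rfl⟩
    simp only [LinearMap.comp_apply, LinearMap.restrict_apply, LinearMap.id_apply]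
    simp only [F, Gm, Submodule.mkQ_apply, Submodule.mapQ_apply]
    exact (Submodule.Quotient.eq W').2 (hfg v hv)
  · ext ⟨_, v, hv, rfl⟩
    simp only [LinearMap.comp_apply, LinearMap.restrict_apply, LinearMap.id_apply]
    simp only [F, Gm, Submodule.mkQ_apply, Submodule.mapQ_apply]
    exact (Submodule.Quotient.eq W).2 (hgf v hv)

section Abstract

variable {G : Type} [AddCommGroup G] (k : Type) [Field k] {r : ℕ} (n : Fin r → G)

/-- Compatibility of a family of pieces with the grading of the polynomial ring. -/
def IsGr {X : Type} [AddCommGroup X] [Module k X] [Module (MvPolynomial (Fin r) k) X]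
    (gr : G → Submodule k X) : Prop :=
  ∀ (a b : G) (p : MvPolynomial (Fin r) k) (x : X),
    p ∈ weightedHomogeneousSubmodule k n a → x ∈ gr b → p • x ∈ gr (a + b)

/-- Graded lifting property. -/
def GProj {P : Type} [AddCommGroup P] [Module k P] [Module (MvPolynomial (Fin r) k) P]
    (gr : G → Submodule k P) : Prop :=
  ∀ (X Y : Type) [AddCommGroup X] [Module k X] [Module (MvPolynomial (Fin r) k) X]
    [IsScalarTower k (MvPolynomial (Fin r) k) X]
    [AddCommGroup Y] [Module (MvPolynomial (Fin r) k) Y] (gX : G → Submodule k X),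
    IsGr k n gX → ∀ (u : P →ₗ[MvPolynomial (Fin r) k] Y) (v : X →ₗ[MvPolynomial (Fin r) k] Y),
    (∀ g, ∀ p ∈ gr g, ∃ x ∈ gX g, v x = u p) →
    ∃ f : P →ₗ[MvPolynomial (Fin r) k] X, ∀ g, ∀ p ∈ gr g, f p ∈ gX g ∧ v (f p) = u p

/-- Graded complexes of graded projectives, exact in positive degrees. -/
structure GCx where
  X : ℕ → Type
  [acg : ∀ j, AddCommGroup (X j)]
  [modk : ∀ j, Module k (X j)]
  [modR : ∀ j, Module (MvPolynomial (Fin r) k) (X j)]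
  [tower : ∀ j, IsScalarTower k (MvPolynomial (Fin r) k) (X j)]
  gr : ∀ j, G → Submodule k (X j)
  d : ∀ j, X (j + 1) →ₗ[MvPolynomial (Fin r) k] X j
  isGr : ∀ j, IsGr k n (gr j)
  proj : ∀ j, GProj k n (gr j)
  d_gr : ∀ j g, ∀ x ∈ gr (j + 1) g, d j x ∈ gr j g
  d_d : ∀ j g, ∀ x ∈ gr (j + 2) g, d j (d (j + 1) x) = 0
  exact : ∀ j g, ∀ x ∈ gr (j + 1) g, d j x = 0 → ∃ y ∈ gr (j + 2) g, d (j + 1) y = x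

attribute [instance] GCx.acg GCx.modk GCx.modR GCx.tower

variable {k}

/-- The degree `g` part of `𝔪 X`. -/
noncomputable def mPart {X : Type} [AddCommGroup X] [Module k X]
    [Module (MvPolynomial (Fin r) k) X] [IsScalarTower k (MvPolynomial (Fin r) k) X]
    (gr : G → Submodule k X) (g : G) : Submodule k X :=
  ⨆ i : Fin r, Submodule.map (Algebra.lsmul k k X (MvPolynomial.X i : MvPolynomial (Fin r) k))
    (gr (g - n i))

theorem mPart_le_gr {X : Type} [AddCommGroup X] [Module k X]
    [Module (MvPolynomial (Fin r) k) X] [IsScalarTower k (MvPolynomial (Fin r) k) X]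
    (gr : G → Submodule k X) (h : IsGr k n gr) (g : G) : mPart n gr g ≤ gr g := by
  refine iSup_le fun i => ?_
  rintro _ ⟨x, hx, rfl⟩
  have := h (n i) (g - n i) _ x ((mem_weightedHomogeneousSubmodule k n _ _).2
    (isWeightedHomogeneous_X k n i)) hx
  simpa using this

theorem mPart_map {X Y : Type} [AddCommGroup X] [Module k X]
    [Module (MvPolynomial (Fin r) k) X] [IsScalarTower k (MvPolynomial (Fin r) k) X]
    [AddCommGroup Y] [Module k Y]
    [Module (MvPolynomial (Fin r) k) Y] [IsScalarTower k (MvPolynomial (Fin r) k) Y]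
    (gr : G → Submodule k X) (gr' : G → Submodule k Y) (f : X →ₗ[MvPolynomial (Fin r) k] Y)
    (hf : ∀ g, ∀ x ∈ gr g, f x ∈ gr' g) (g : G) :
    ∀ x ∈ mPart n gr g, f x ∈ mPart n gr' g := by
  suffices mPart n gr g ≤ (mPart n gr' g).comap (f.restrictScalars k) from this
  refine iSup_le fun i => ?_
  rintro _ ⟨x, hx, rfl⟩
  refine Submodule.mem_iSup_of_mem i ⟨f x, hf _ _ hx, ?_⟩
  simp

variable {n}

/-- The two complexes are comparable in homological degree `j`. -/
def Level (A B : GCx k n) (j : ℕ) : Prop :=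
  ∃ (f : A.X j →ₗ[MvPolynomial (Fin r) k] B.X j) (g : B.X j →ₗ[MvPolynomial (Fin r) k] A.X j)
    (h : A.X j →ₗ[MvPolynomial (Fin r) k] A.X (j + 1))
    (h' : B.X j →ₗ[MvPolynomial (Fin r) k] B.X (j + 1)),
    (∀ e, ∀ x ∈ A.gr j e, f x ∈ B.gr j e) ∧ (∀ e, ∀ x ∈ B.gr j e, g x ∈ A.gr j e) ∧
    (∀ e, ∀ x ∈ A.gr j e, h x ∈ A.gr (j + 1) e) ∧ (∀ e, ∀ x ∈ B.gr j e, h' x ∈ B.gr (j + 1) e) ∧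
    (∀ e, ∀ x ∈ A.gr (j + 1) e, ∃ y ∈ B.gr (j + 1) e, B.d j y = f (A.d j x)) ∧
    (∀ e, ∀ x ∈ B.gr (j + 1) e, ∃ y ∈ A.gr (j + 1) e, A.d j y = g (B.d j x)) ∧
    (∀ e, ∀ x ∈ A.gr (j + 1) e, A.d j (h (A.d j x)) = g (f (A.d j x)) - A.d j x) ∧
    (∀ e, ∀ x ∈ B.gr (j + 1) e, B.d j (h' (B.d j x)) = f (g (B.d j x)) - B.d j x)

theorem Level.half (A B : GCx k n) (j : ℕ)
    (f : A.X j →ₗ[MvPolynomial (Fin r) k] B.X j) (g : B.X j →ₗ[MvPolynomial (Fin r) k] A.X j)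
    (h : A.X j →ₗ[MvPolynomial (Fin r) k] A.X (j + 1))
    (h3 : ∀ e, ∀ x ∈ A.gr j e, h x ∈ A.gr (j + 1) e)
    (h7 : ∀ e, ∀ x ∈ A.gr (j + 1) e, A.d j (h (A.d j x)) = g (f (A.d j x)) - A.d j x)
    (F : A.X (j + 1) →ₗ[MvPolynomial (Fin r) k] B.X (j + 1))
    (F' : B.X (j + 1) →ₗ[MvPolynomial (Fin r) k] A.X (j + 1))
    (hF : ∀ e, ∀ x ∈ A.gr (j + 1) e, F x ∈ B.gr (j + 1) e ∧ B.d j (F x) = f (A.d j x))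
    (hF' : ∀ e, ∀ x ∈ B.gr (j + 1) e, F' x ∈ A.gr (j + 1) e ∧ A.d j (F' x) = g (B.d j x)) :
    ∃ H : A.X (j + 1) →ₗ[MvPolynomial (Fin r) k] A.X (j + 2),
      (∀ e, ∀ x ∈ A.gr (j + 1) e, H x ∈ A.gr (j + 2) e) ∧
      (∀ e, ∀ x ∈ A.gr (j + 2) e, A.d (j + 1) (H (A.d (j + 1) x)) =
        F' (F (A.d (j + 1) x)) - A.d (j + 1) x) := by
  obtain ⟨H, hH⟩ := A.proj (j + 1) (A.X (j + 2)) (A.X (j + 1)) (A.gr (j + 2)) (A.isGr _)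
    (F' ∘ₗ F - LinearMap.id - h ∘ₗ A.d j) (A.d (j + 1)) (by
      intro e p hp
      refine A.exact j e _ ?_ ?_
      · simp only [LinearMap.sub_apply, LinearMap.comp_apply, LinearMap.id_apply]
        exact Submodule.sub_mem _ (Submodule.sub_mem _ (hF' e _ (hF e p hp).1).1 hp)
          (h3 e _ (A.d_gr j e p hp))
      · simp only [LinearMap.sub_apply, LinearMap.comp_apply, LinearMap.id_apply, map_sub]
        rw [(hF' e _ (hF e p hp).1).2, (hF e p hp).2, h7 e p hp, sub_self])
  refine ⟨H, fun e x hx => (hH e x hx).1, fun e x hx => ?_⟩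
  rw [(hH e _ (A.d_gr (j + 1) e x hx)).2]
  simp [A.d_d j e x hx]

theorem Level.succ (A B : GCx k n) (j : ℕ) (hL : Level A B j) : Level A B (j + 1) := by
  obtain ⟨f, g, h, h', h1, h2, h3, h4, h5, h6, h7, h8⟩ := hL
  obtain ⟨F, hF⟩ := A.proj (j + 1) (B.X (j + 1)) (B.X j) (B.gr (j + 1)) (B.isGr _)
    (f ∘ₗ A.d j) (B.d j) h5
  obtain ⟨F', hF'⟩ := B.proj (j + 1) (A.X (j + 1)) (A.X j) (A.gr (j + 1)) (A.isGr _)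
    (g ∘ₗ B.d j) (A.d j) h6
  obtain ⟨H, hH, hH2⟩ := Level.half A B j f g h h3 h7 F F' hF hF'
  obtain ⟨H', hH', hH2'⟩ := Level.half B A j g f h' h4 h8 F' F hF' hF
  refine ⟨F, F', H, H', fun e x hx => (hF e x hx).1, fun e x hx => (hF' e x hx).1, hH, hH',
    fun e x hx => ?_, fun e x hx => ?_, hH2, hH2'⟩
  · have hx' := A.d_gr _ e x hx
    refine B.exact j e _ (hF e _ hx').1 ?_
    rw [(hF e _ hx').2]
    simp [A.d_d j e x hx]
  · have hx' := B.d_gr _ e x hx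
    refine A.exact j e _ (hF' e _ hx').1 ?_
    rw [(hF' e _ hx').2]
    simp [B.d_d j e x hx]

/-- numerator -/
noncomputable def numer (A : GCx k n) (j : ℕ) (e : G) : Submodule k (A.X j) :=
  mPart n (A.gr j) e ⊓ Submodule.map ((A.d j).restrictScalars k) (A.gr (j + 1) e)

/-- denominator -/
noncomputable def denom (A : GCx k n) (j : ℕ) (e : G) : Submodule k (A.X j) :=
  Submodule.map ((A.d j).restrictScalars k) (mPart n (A.gr (j + 1)) e)

theorem denom_map (A B : GCx k n) (j : ℕ) (f : A.X j →ₗ[MvPolynomial (Fin r) k] B.X j)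
    (h5 : ∀ e, ∀ x ∈ A.gr (j + 1) e, ∃ y ∈ B.gr (j + 1) e, B.d j y = f (A.d j x)) (e : G) :
    ∀ x ∈ denom A j e, f x ∈ denom B j e := by
  suffices mPart n (A.gr (j + 1)) e ≤
      (denom B j e).comap ((f ∘ₗ A.d j).restrictScalars k) by
    rintro _ ⟨x, hx, rfl⟩
    exact this hx
  refine iSup_le fun i => ?_
  rintro _ ⟨x, hx, rfl⟩
  obtain ⟨y, hy, hy2⟩ := h5 _ x hx
  refine ⟨(MvPolynomial.X i : MvPolynomial (Fin r) k) • y,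
    Submodule.mem_iSup_of_mem i ⟨y, hy, by simp⟩, ?_⟩
  simp [hy2]

theorem numer_map (A B : GCx k n) (j : ℕ) (f : A.X j →ₗ[MvPolynomial (Fin r) k] B.X j)
    (h1 : ∀ e, ∀ x ∈ A.gr j e, f x ∈ B.gr j e)
    (h5 : ∀ e, ∀ x ∈ A.gr (j + 1) e, ∃ y ∈ B.gr (j + 1) e, B.d j y = f (A.d j x)) (e : G) :
    ∀ x ∈ numer A j e, f x ∈ numer B j e := by
  rintro _ ⟨hm, x, hx, rfl⟩
  refine ⟨mPart_map n _ _ f h1 e _ hm, ?_⟩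
  obtain ⟨y, hy, hy2⟩ := h5 _ x hx
  exact ⟨y, hy, hy2⟩

theorem Level.finrank_eq (A B : GCx k n) (j : ℕ) (hL : Level A B j) (e : G) :
    Module.finrank k ↥(Submodule.map (denom A j e).mkQ (numer A j e)) =
    Module.finrank k ↥(Submodule.map (denom B j e).mkQ (numer B j e)) := by
  obtain ⟨f, g, h, h', h1, h2, h3, h4, h5, h6, h7, h8⟩ := hL
  refine finrank_subquot_eq _ _ _ _ (f.restrictScalars k) (g.restrictScalars k)
    (numer_map A B j f h1 h5 e) (numer_map B A j g h2 h6 e)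
    (denom_map A B j f h5 e) (denom_map B A j g h6 e) ?_ ?_
  · rintro _ ⟨hm, x, hx, rfl⟩
    have := h7 e x hx
    exact ⟨_, mPart_map n _ _ h h3 e _ hm, this⟩
  · rintro _ ⟨hm, x, hx, rfl⟩
    have := h8 e x hx
    exact ⟨_, mPart_map n _ _ h' h4 e _ hm, this⟩

theorem finrank_eq_of_level_zero (A B : GCx k n) (hL : Level A B 0) (j : ℕ) (e : G) :
    Module.finrank k ↥(Submodule.map (denom A j e).mkQ (numer A j e)) =
    Module.finrank k ↥(Submodule.map (denom B j e).mkQ (numer B j e)) := by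
  refine Level.finrank_eq A B j ?_ e
  induction j with
  | zero => exact hL
  | succ j ih => exact Level.succ A B j ih

end Abstract

section Cone

variable (k : Type) [Field k] {V : Type} [LinearOrder V]

theorem sBoundary_single (F : Finset V) : sBoundary k (Finsupp.single F 1) =
    ∑ x ∈ F, ((-1 : k) ^ (F.filter (fun y => y < x)).card) •
        Finsupp.single (F.erase x) (1 : k) := by
  simp [sBoundary]

/-- The cone operator. -/
noncomputable def coneOp (a : V) : (Finset V →₀ k) →ₗ[k] (Finset V →₀ k) :=
  Finsupp.lsum k fun F => LinearMap.toSpanSingleton k _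
    (if a ∈ F then 0 else Finsupp.single (insert a F) (1 : k))

theorem coneOp_single (a : V) (F : Finset V) : coneOp k a (Finsupp.single F 1) =
    if a ∈ F then 0 else Finsupp.single (insert a F) (1 : k) := by
  simp [coneOp]

theorem sBoundary_insert (a : V) (F : Finset V) (h : ∀ x ∈ F, a < x) :
    sBoundary k (Finsupp.single (insert a F) 1) =
      Finsupp.single F 1 - coneOp k a (sBoundary k (Finsupp.single F 1)) := by
  have ha : a ∉ F := fun h' => lt_irrefl _ (h a h')
  rw [sBoundary_single, sBoundary_single, Finset.sum_insert ha, sub_eq_add_neg, map_sum,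
    ← Finset.sum_neg_distrib]
  congr 1
  · have : (insert a F).filter (fun y => y < a) = ∅ := by
      ext y
      simp only [Finset.mem_filter, Finset.mem_insert, Finset.notMem_empty, iff_false]
      rintro ⟨rfl | hy, h2⟩
      · exact lt_irrefl _ h2
      · exact lt_asymm h2 (h y hy)
    rw [this, Finset.erase_insert ha]
    simp
  · refine Finset.sum_congr rfl fun x hx => ?_
    have h1 : (insert a F).filter (fun y => y < x) = insert a (F.filter (fun y => y < x)) := by
      rw [Finset.filter_insert, if_pos (h x hx)]
    have h2 : a ∉ F.filter (fun y => y < x) := fun h' => ha (Finset.mem_filter.1 h').1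
    have h3 : a ∉ F.erase x := fun h' => ha (Finset.mem_of_mem_erase h')
    rw [h1, Finset.card_insert_of_notMem h2, map_smul, coneOp_single, if_neg h3,
      Finset.erase_insert_of_ne (h x hx).ne, pow_succ]
    simp

theorem cone_homotopy_single (a : V) (F : Finset V) (h : ∀ x ∈ F, a ≤ x) :
    sBoundary k (coneOp k a (Finsupp.single F 1)) +
      coneOp k a (sBoundary k (Finsupp.single F 1)) = Finsupp.single F 1 := by
  by_cases ha : a ∈ F
  · rw [coneOp_single, if_pos ha, map_zero, zero_add]
    obtain ⟨F', hF', rfl⟩ : ∃ F', a ∉ F' ∧ F = insert a F' :=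
      ⟨F.erase a, Finset.notMem_erase a F, (Finset.insert_erase ha).symm⟩
    rw [sBoundary_insert, map_sub, coneOp_single, if_neg hF']
    · have : ∀ z, coneOp k a (coneOp k a z) = 0 := by
        intro z
        induction z using Finsupp.induction_linear with
        | zero => simp
        | add f g hf hg => simp [hf, hg]
        | single F c =>
          have : Finsupp.single F c = c • Finsupp.single F (1 : k) := by simp
          rw [this, map_smul, map_smul, coneOp_single]
          split_ifs
          · simp
          · rw [coneOp_single]; simp
      rw [this, sub_zero]
    · intro x hx
      exact lt_of_le_of_ne (h x (Finset.mem_insert_of_mem hx)) (fun e => hF' (e ▸ hx))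
  · rw [coneOp_single, if_neg ha, sBoundary_insert, sub_add_cancel]
    intro x hx
    exact lt_of_le_of_ne (h x hx) (fun e => ha (e ▸ hx))

/-- Induction principle for supported chains. -/
theorem supported_ind {α : Type} (s : Set α) (W : Submodule k (α →₀ k))
    (h : ∀ F ∈ s, Finsupp.single F (1 : k) ∈ W) : Finsupp.supported k k s ≤ W := by
  rw [Finsupp.supported_eq_span_single, Submodule.span_le]
  rintro _ ⟨F, hF, rfl⟩
  exact h F hF

theorem cone_homotopy (a : V) (z : Finset V →₀ k)
    (hz : z ∈ Finsupp.supported k k {F : Finset V | ∀ x ∈ F, a ≤ x}) :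
    sBoundary k (coneOp k a z) + coneOp k a (sBoundary k z) = z := by
  have := supported_ind k _ (LinearMap.eqLocus
    (sBoundary k ∘ₗ coneOp k a + coneOp k a ∘ₗ sBoundary k) LinearMap.id)
    (fun F hF => cone_homotopy_single k a F hF) hz
  exact this

theorem sBoundary_sBoundary_single (F : Finset V) :
    sBoundary k (sBoundary k (Finsupp.single F 1)) = 0 := by
  induction F using Finset.induction_on_min with
  | empty => simp [sBoundary_single]
  | insert a F ha ih =>
    rw [sBoundary_insert k a F ha, map_sub]
    have := cone_homotopy k a (sBoundary k (Finsupp.single F 1)) (by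
      rw [sBoundary_single]
      refine Submodule.sum_mem _ fun x hx => Submodule.smul_mem _ _ ?_
      refine Finsupp.single_mem_supported _ _ ?_
      intro y hy
      exact (ha y (Finset.mem_of_mem_erase hy)).le)
    rw [ih, map_zero, add_zero] at this
    rw [this, sub_self]

theorem sBoundary_sBoundary (z : Finset V →₀ k) : sBoundary k (sBoundary k z) = 0 := by
  have := supported_ind k Set.univ (LinearMap.ker (sBoundary k (V := V) ∘ₗ sBoundary k (V := V)))
    (fun F _ => by
      rw [LinearMap.mem_ker, LinearMap.comp_apply]
      exact sBoundary_sBoundary_single k F)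
  have hz : z ∈ Finsupp.supported k k (Set.univ : Set (Finset V)) := by
    rw [Finsupp.supported_univ]; exact Submodule.mem_top
  have h2 := this hz
  rwa [LinearMap.mem_ker, LinearMap.comp_apply] at h2

/-- chains of the full simplex on `C` with `j+1` vertices -/
noncomputable def fullCh (C : Set V) (j : ℕ) : Submodule k (Finset V →₀ k) :=
  Finsupp.supported k k {F : Finset V | F.card = j ∧ ∀ a ∈ F, a ∈ C}

theorem sBoundary_fullCh (C : Set V) (j : ℕ) (z) (hz : z ∈ fullCh k C (j + 1)) :
    sBoundary k z ∈ fullCh k C j := by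
  refine supported_ind k _ ((fullCh k C j).comap (sBoundary k)) ?_ hz
  rintro F ⟨hF, hF2⟩
  rw [Submodule.mem_comap, sBoundary_single]
  refine Submodule.sum_mem _ fun x hx => Submodule.smul_mem _ _ ?_
  refine Finsupp.single_mem_supported _ _ ⟨?_, fun y hy => hF2 y (Finset.mem_of_mem_erase hy)⟩
  rw [Finset.card_erase_of_mem hx, hF]; simp

theorem fullCh_exact [WellFoundedLT V] (C : Set V) (j : ℕ) (z) (hz : z ∈ fullCh k C (j + 1))
    (h0 : sBoundary k z = 0) : ∃ y ∈ fullCh k C (j + 2), sBoundary k y = z := by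
  by_cases hC : C.Nonempty
  · obtain ⟨a, haC, ha⟩ : ∃ a ∈ C, ∀ x ∈ C, a ≤ x := by
      obtain ⟨a, h1, h2⟩ := WellFounded.has_min (wellFounded_lt (α := V)) C hC
      exact ⟨a, h1, fun x hx => not_lt.1 (h2 x hx)⟩
    refine ⟨coneOp k a z, ?_, ?_⟩
    · refine supported_ind k _ ((fullCh k C (j + 2)).comap (coneOp k a)) ?_ hz
      rintro F ⟨hF, hF2⟩
      rw [Submodule.mem_comap, coneOp_single]
      split_ifs with h
      · exact Submodule.zero_mem _
      · refine Finsupp.single_mem_supported _ _ ⟨?_, ?_⟩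
        · rw [Finset.card_insert_of_notMem h, hF]
        · intro y hy
          rcases Finset.mem_insert.1 hy with rfl | hy
          · exact haC
          · exact hF2 y hy
    · have := cone_homotopy k a z (by
        refine Finsupp.supported_mono ?_ hz
        intro F hF x hx
        exact ha x (hF.2 x hx))
      rwa [h0, map_zero, add_zero] at this
  · refine ⟨0, Submodule.zero_mem _, ?_⟩
    have : z ∈ Finsupp.supported k k (∅ : Set (Finset V)) := by
      refine Finsupp.supported_mono ?_ hz
      rintro F ⟨hF, hF2⟩
      obtain ⟨x, hx⟩ := Finset.card_pos.1 (by omega : 0 < F.card)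
      exact hC ⟨x, hF2 x hx⟩
    simp at this
    simp [this]

end Cone

section ChainModule

/-- finite sets of monomials -/
abbrev MSet (r : ℕ) : Type := Finset (Lex (Fin r →₀ ℕ))

/-- Translation of a set of monomials. -/
noncomputable def trSet {r : ℕ} (α : Fin r →₀ ℕ) (F : MSet r) : MSet r :=
  F.map (addLeftEmbedding (toLex α))

theorem mem_trSet {r : ℕ} {α : Fin r →₀ ℕ} {F : MSet r} {b : Lex (Fin r →₀ ℕ)} :
    b ∈ trSet α F ↔ ∃ a ∈ F, toLex α + a = b := by
  simp [trSet]

theorem trSet_zero {r : ℕ} (F : MSet r) : trSet 0 F = F := by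
  ext b; simp [mem_trSet]

theorem trSet_add {r : ℕ} (α β : Fin r →₀ ℕ) (F : MSet r) :
    trSet (α + β) F = trSet α (trSet β F) := by
  ext b; simp [mem_trSet, add_assoc]

theorem card_trSet {r : ℕ} (α : Fin r →₀ ℕ) (F : MSet r) : (trSet α F).card = F.card := by
  simp [trSet]

variable (k : Type) [Field k]

/-- The action of monomials on chains. -/
noncomputable def trHom (r : ℕ) : Multiplicative (Fin r →₀ ℕ) →* Module.End k (MSet r →₀ k) where
  toFun α := Finsupp.lmapDomain k k (trSet α.toAdd)
  map_one' := by
    ext F : 2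
    simp [trSet_zero]
  map_mul' α β := by
    ext F : 2
    simp [trSet_add]

/-- The action of polynomials on chains. -/
noncomputable def chAct (r : ℕ) : MvPolynomial (Fin r) k →ₐ[k] Module.End k (MSet r →₀ k) :=
  AddMonoidAlgebra.lift k _ _ (trHom k r)

noncomputable instance chModule (r : ℕ) : Module (MvPolynomial (Fin r) k) (MSet r →₀ k) :=
  Module.compHom _ (chAct k r).toRingHom

theorem ch_smul_def {r : ℕ} (p : MvPolynomial (Fin r) k) (z : MSet r →₀ k) :
    p • z = chAct k r p z := rfl

instance chTower (r : ℕ) : IsScalarTower k (MvPolynomial (Fin r) k) (MSet r →₀ k) where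
  smul_assoc c p z := by
    simp [ch_smul_def]

theorem monomial_smul_single {r : ℕ} (α : Fin r →₀ ℕ) (c : k) (F : MSet r) :
    (monomial α c : MvPolynomial (Fin r) k) • (Finsupp.single F 1 : MSet r →₀ k) =
      Finsupp.single (trSet α F) c := by
  rw [ch_smul_def, chAct]
  erw [AddMonoidAlgebra.lift_single]
  simp [trHom]

theorem X_smul_single {r : ℕ} (i : Fin r) (F : MSet r) :
    (MvPolynomial.X i : MvPolynomial (Fin r) k) • (Finsupp.single F 1 : MSet r →₀ k) =
      Finsupp.single (trSet (Finsupp.single i 1) F) 1 :=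
  monomial_smul_single k _ _ _

theorem poly_smul_comm {k : Type} [Field k] {r : ℕ} {Y : Type} [AddCommGroup Y] [Module k Y]
    [Module (MvPolynomial (Fin r) k) Y] [IsScalarTower k (MvPolynomial (Fin r) k) Y]
    (p : MvPolynomial (Fin r) k) (c : k) (w : Y) : p • c • w = c • p • w := by
  rw [← algebraMap_smul (MvPolynomial (Fin r) k) c w,
    ← algebraMap_smul (MvPolynomial (Fin r) k) c (p • w), smul_comm]

/-- A `k`-linear map commuting with monomials is linear over polynomials. -/
theorem exists_linear_ext {r : ℕ} {Y : Type} [AddCommGroup Y] [Module k Y]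
    [Module (MvPolynomial (Fin r) k) Y] [IsScalarTower k (MvPolynomial (Fin r) k) Y]
    (f : (MSet r →₀ k) →ₗ[k] Y)
    (hf : ∀ α F, f (Finsupp.single (trSet α F) 1) =
      (monomial α 1 : MvPolynomial (Fin r) k) • f (Finsupp.single F 1)) :
    ∃ g : (MSet r →₀ k) →ₗ[MvPolynomial (Fin r) k] Y, ∀ z, g z = f z := by
  refine ⟨{ toFun := f, map_add' := f.map_add, map_smul' := ?_ }, fun z => rfl⟩
  intro p z
  simp only [RingHom.id_apply]
  induction z using Finsupp.induction_linear with
  | zero => simp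
  | add z w hz hw => simp [hz, hw]
  | single F c =>
    have h1 : Finsupp.single F c = c • Finsupp.single F (1 : k) := by simp
    rw [h1, poly_smul_comm, f.map_smul, f.map_smul, poly_smul_comm]
    congr 1
    induction p using MvPolynomial.induction_on' with
    | monomial α a =>
      rw [monomial_smul_single]
      have h2 : Finsupp.single (trSet α F) a = a • Finsupp.single (trSet α F) (1 : k) := by simp
      have h3 : (monomial α a : MvPolynomial (Fin r) k) = a • monomial α 1 := by
        simp [smul_monomial]
      rw [h2, map_smul, hf, h3, smul_assoc]
    | add p q hp hq =>
      rw [add_smul, add_smul, map_add, hp, hq]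

theorem sBoundary_trSet {r : ℕ} (α : Fin r →₀ ℕ) (F : MSet r) :
    sBoundary k (Finsupp.single (trSet α F) 1) =
      (monomial α 1 : MvPolynomial (Fin r) k) • sBoundary k (Finsupp.single F 1) := by
  rw [sBoundary_single, sBoundary_single, trSet, Finset.sum_map, Finset.smul_sum]
  refine Finset.sum_congr rfl fun x hx => ?_
  rw [poly_smul_comm, monomial_smul_single]
  congr 2
  · rw [Finset.filter_map, Finset.card_map]
    congr 2
    ext y
    simp
  · ext y
    simp only [trSet, Finset.mem_erase, Finset.mem_map]
    constructor
    · rintro ⟨h1, a, ha, rfl⟩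
      exact ⟨a, ⟨fun h => h1 (h ▸ rfl), ha⟩, rfl⟩
    · rintro ⟨a, ⟨h1, ha⟩, rfl⟩
      exact ⟨fun h => h1 ((addLeftEmbedding (toLex α)).injective h), a, ha, rfl⟩

theorem exists_chD (r : ℕ) : ∃ g : (MSet r →₀ k) →ₗ[MvPolynomial (Fin r) k] (MSet r →₀ k),
    ∀ z, g z = sBoundary k z :=
  exists_linear_ext k (sBoundary k) (sBoundary_trSet k)

/-- The boundary as a linear map over polynomials. -/
noncomputable def chD (r : ℕ) : (MSet r →₀ k) →ₗ[MvPolynomial (Fin r) k] (MSet r →₀ k) :=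
  (exists_chD k r).choose

theorem chD_apply {r : ℕ} (z : MSet r →₀ k) : chD k r z = sBoundary k z :=
  (exists_chD k r).choose_spec z

variable {G : Type} [AddCommGroup G] {r : ℕ} (n : Fin r → G)

/-- Monomials of degree `g`. -/
def degSet (g : G) : Set (Lex (Fin r →₀ ℕ)) := {a | Finsupp.weight n (ofLex a) = g}

/-- The grading on chains. -/
noncomputable def chGr (j : ℕ) (g : G) : Submodule k (MSet r →₀ k) := fullCh k (degSet n g) (j + 1)

theorem chGr_isGr (j : ℕ) : IsGr k n (chGr k n j) := by
  intro a b p x hp hx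
  refine supported_ind k _ ((chGr k n j (a + b)).comap
    (Algebra.lsmul k k (MSet r →₀ k) p)) ?_ hx
  rintro F ⟨hF, hF2⟩
  change p • (Finsupp.single F 1 : MSet r →₀ k) ∈ chGr k n j (a + b)
  rw [p.as_sum, Finset.sum_smul]
  refine Submodule.sum_mem _ fun α hα => ?_
  rw [monomial_smul_single]
  have h1 : Finsupp.weight n α = a := hp (mem_support_iff.1 hα)
  refine Finsupp.single_mem_supported _ _ ⟨by rw [card_trSet, hF], ?_⟩
  intro c hc
  obtain ⟨c, hcF, rfl⟩ := mem_trSet.1 hc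
  have h2 : Finsupp.weight n (ofLex c) = b := hF2 c hcF
  simp [degSet, h1, h2]

/-- The common divisor of a set of monomials. -/
noncomputable def gcdSet (F : MSet r) : Fin r →₀ ℕ :=
  if h : F.Nonempty then F.inf' h ofLex else 0

theorem gcdSet_le (F : MSet r) (a) (ha : a ∈ F) : gcdSet F ≤ ofLex a := by
  rw [gcdSet, dif_pos ⟨a, ha⟩]
  exact Finset.inf'_le _ ha

theorem gcdSet_trSet (α : Fin r →₀ ℕ) (F : MSet r) (hF : F.Nonempty) :
    gcdSet (trSet α F) = α + gcdSet F := by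
  have h2 : (trSet α F).Nonempty := by simpa [trSet] using hF
  apply le_antisymm
  · have hle : ∀ a ∈ F, gcdSet (trSet α F) - α ≤ ofLex a := by
      intro a ha
      have := gcdSet_le (trSet α F) (toLex α + a) (mem_trSet.2 ⟨a, ha, rfl⟩)
      rw [tsub_le_iff_left]
      exact this
    rw [← tsub_le_iff_left]
    conv_rhs => rw [gcdSet, dif_pos hF]
    exact Finset.le_inf' _ _ hle
  · conv_rhs => rw [gcdSet, dif_pos h2]
    refine Finset.le_inf' _ _ ?_
    intro b hb
    obtain ⟨a, ha, rfl⟩ := mem_trSet.1 hb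
    have := gcdSet_le F a ha
    rw [ofLex_add]
    exact add_le_add_right this α

/-- Division of a set of monomials by their common divisor. -/
noncomputable def redSet (F : MSet r) : MSet r := F.image fun a => toLex (ofLex a - gcdSet F)

theorem trSet_image (α : Fin r →₀ ℕ) (F : MSet r) (h : ∀ a ∈ F, α ≤ ofLex a) :
    trSet α (F.image fun a => toLex (ofLex a - α)) = F := by
  have key : ∀ a ∈ F, toLex α + toLex (ofLex a - α) = a := by
    intro a ha
    rw [← toLex_add, add_tsub_cancel_of_le (h a ha), toLex_ofLex]
  ext b
  simp only [mem_trSet, Finset.mem_image]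
  constructor
  · rintro ⟨_, ⟨a, ha, rfl⟩, rfl⟩
    rwa [key a ha]
  · intro hb
    exact ⟨_, ⟨b, hb, rfl⟩, key b hb⟩

theorem trSet_redSet (F : MSet r) : trSet (gcdSet F) (redSet F) = F :=
  trSet_image _ _ (gcdSet_le F)

theorem redSet_trSet (α : Fin r →₀ ℕ) (F : MSet r) (hF : F.Nonempty) :
    redSet (trSet α F) = redSet F := by
  ext b
  simp only [redSet, Finset.mem_image, mem_trSet, gcdSet_trSet α F hF]
  constructor
  · rintro ⟨_, ⟨a, ha, rfl⟩, rfl⟩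
    refine ⟨a, ha, ?_⟩
    rw [ofLex_add, ofLex_toLex, add_tsub_add_eq_tsub_left]
  · rintro ⟨a, ha, rfl⟩
    refine ⟨_, ⟨a, ha, rfl⟩, ?_⟩
    rw [ofLex_add, ofLex_toLex, add_tsub_add_eq_tsub_left]

theorem degSet_of_trSet {α : Fin r →₀ ℕ} {F : MSet r} {g : G}
    (h : ∀ a ∈ trSet α F, a ∈ degSet n g) :
    ∀ a ∈ F, a ∈ degSet n (g - Finsupp.weight n α) := by
  intro a ha
  have h1 : Finsupp.weight n (ofLex (toLex α + a)) = g := h _ (mem_trSet.2 ⟨a, ha, rfl⟩)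
  rw [ofLex_add, ofLex_toLex, map_add] at h1
  change Finsupp.weight n (ofLex a) = _
  rw [← h1]; abel

theorem chGr_proj (j : ℕ) : GProj k n (chGr (r := r) k n j) := by
  intro X Y _ _ _ _ _ _ gX hX u v huv
  have hex : ∀ F : MSet r, ∃ x : X, (F = ∅ → x = 0) ∧
      ∀ g, F.card = j + 1 → (∀ a ∈ F, a ∈ degSet n g) →
        x ∈ gX g ∧ v x = u (Finsupp.single F 1) := by
    intro F
    by_cases h : F.card = j + 1 ∧ ∃ g, ∀ a ∈ F, a ∈ degSet n g
    · obtain ⟨hc, g, hg⟩ := h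
      obtain ⟨x, hx, hx2⟩ := huv g (Finsupp.single F 1)
        (Finsupp.single_mem_supported _ _ ⟨hc, hg⟩)
      refine ⟨x, ?_, ?_⟩
      · rintro rfl
        simp at hc
      · intro g' _ hg'
        obtain ⟨a, ha⟩ := Finset.card_pos.1 (by omega : 0 < F.card)
        have h1 : _ = g := hg a ha
        have h2 : _ = g' := hg' a ha
        obtain rfl : g = g' := h1.symm.trans h2
        exact ⟨hx, hx2⟩
    · exact ⟨0, fun _ => rfl, fun g hc hg => (h ⟨hc, g, hg⟩).elim⟩
  choose x0 hx0 hx1 using hex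
  let f0 : (MSet r →₀ k) →ₗ[k] X := Finsupp.lsum k fun F => LinearMap.toSpanSingleton k _
    ((monomial (gcdSet F) 1 : MvPolynomial (Fin r) k) • x0 (redSet F))
  have hf0 : ∀ F, f0 (Finsupp.single F 1) =
      (monomial (gcdSet F) 1 : MvPolynomial (Fin r) k) • x0 (redSet F) := by
    intro F; simp [f0]
  obtain ⟨f, hf⟩ := exists_linear_ext k f0 (by
    intro α F
    rw [hf0, hf0]
    rcases F.eq_empty_or_nonempty with rfl | hF
    · have h1 : trSet α (∅ : MSet r) = ∅ := by simp [trSet]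
      have h2 : redSet (∅ : MSet r) = ∅ := by simp [redSet]
      rw [h1, h2, hx0 ∅ rfl]; simp
    · rw [gcdSet_trSet α F hF, redSet_trSet α F hF, ← mul_smul, monomial_mul, one_mul])
  have key : ∀ g (F : MSet r), F.card = j + 1 → (∀ a ∈ F, a ∈ degSet n g) →
      f (Finsupp.single F 1) ∈ gX g ∧ v (f (Finsupp.single F 1)) = u (Finsupp.single F 1) := by
    intro g F hc hg
    have hF := trSet_redSet F
    have hc' : (redSet F).card = j + 1 := by rw [← card_trSet (gcdSet F), hF, hc]
    rw [← hF] at hg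
    obtain ⟨h1, h2⟩ := hx1 _ _ hc' (degSet_of_trSet n hg)
    rw [hf, hf0]
    constructor
    · have := hX (Finsupp.weight n (gcdSet F)) _ (monomial (gcdSet F) 1) _
        ((mem_weightedHomogeneousSubmodule k n _ _).2
          (isWeightedHomogeneous_monomial n _ _ rfl)) h1
      rwa [add_sub_cancel] at this
    · rw [map_smul, h2, ← map_smul, monomial_smul_single, hF]
  refine ⟨f, fun g p hp => ⟨?_, ?_⟩⟩
  · exact supported_ind k _ ((gX g).comap (f.restrictScalars k))
      (fun F hF => (key g F hF.1 hF.2).1) hp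
  · have hkv : ∀ z, (v ∘ₗ f - u) z = v (f z) - u z := fun z => rfl
    have := supported_ind k _ ((LinearMap.ker (v ∘ₗ f - u)).restrictScalars k)
      (fun F hF => by
        rw [Submodule.restrictScalars_mem, LinearMap.mem_ker, hkv, (key g F hF.1 hF.2).2,
          sub_self]) hp
    rw [Submodule.restrictScalars_mem, LinearMap.mem_ker, hkv] at this
    exact sub_eq_zero.1 this

/-- The chain complex of full simplices. -/
noncomputable def chCx : GCx k n where
  X _ := MSet r →₀ k
  gr := chGr k n
  d _ := chD k r
  isGr := chGr_isGr k n
  proj := chGr_proj k n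
  d_gr j g x hx := by
    rw [chD_apply]; exact sBoundary_fullCh k _ _ x hx
  d_d j g x hx := by
    rw [chD_apply, chD_apply]; exact sBoundary_sBoundary k x
  exact j g x hx h0 := by
    rw [chD_apply] at h0
    obtain ⟨y, hy, h⟩ := fullCh_exact k _ _ x hx h0
    exact ⟨y, hy, by rw [chD_apply, h]⟩

theorem mPart_chGr (j : ℕ) (m : G) :
    mPart n (chGr (r := r) k n j) m = Finsupp.supported k k (sFaces (nablaLex n m) (j + 1)) := by
  apply le_antisymm
  · refine iSup_le fun i => ?_
    rw [Submodule.map_le_iff_le_comap]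
    refine supported_ind k _ _ ?_
    rintro F ⟨hF, hF2⟩
    change (MvPolynomial.X i : MvPolynomial (Fin r) k) • (Finsupp.single F 1 : MSet r →₀ k) ∈
      Finsupp.supported k k (sFaces (nablaLex n m) (j + 1))
    rw [X_smul_single]
    have hne : (trSet (Finsupp.single i 1) F).Nonempty := by
      rw [← Finset.card_pos, card_trSet]; omega
    refine Finsupp.single_mem_supported _ _ ⟨by rw [card_trSet, hF], Or.inr ⟨hne, ?_, i, ?_⟩⟩
    · intro c hc
      obtain ⟨c, hcF, rfl⟩ := mem_trSet.1 hc
      have h2 : Finsupp.weight n (ofLex c) = m - n i := hF2 c hcF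
      rw [← Finsupp.weight_apply, ofLex_add, ofLex_toLex, map_add, h2]
      simp [Finsupp.weight_apply]
    · intro c hc
      obtain ⟨c, hcF, rfl⟩ := mem_trSet.1 hc
      simp
  · refine supported_ind k _ _ ?_
    rintro F ⟨hF, hF2⟩
    rcases hF2 with rfl | ⟨hne, hdeg, i, hi⟩
    · simp at hF
    · have h1 := trSet_image (Finsupp.single i 1) F (by
        intro a ha
        rw [Finsupp.single_le_iff]
        exact hi a ha)
      set F' := F.image fun a => toLex (ofLex a - Finsupp.single i 1)
      refine Submodule.mem_iSup_of_mem i ⟨Finsupp.single F' 1, ?_, ?_⟩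
      · refine Finsupp.single_mem_supported _ _ ⟨by rw [← hF, ← h1, card_trSet], ?_⟩
        have h3 : ∀ a ∈ trSet (Finsupp.single i 1) F', a ∈ degSet n m := by
          rw [h1]
          intro a ha
          have := hdeg a ha
          rwa [← Finsupp.weight_apply] at this
        have := degSet_of_trSet n h3
        have h4 : Finsupp.weight n (Finsupp.single i 1) = n i := by
          simp [Finsupp.weight_apply]
        rwa [h4] at this
      · change (MvPolynomial.X i : MvPolynomial (Fin r) k) • (Finsupp.single F' 1 : MSet r →₀ k) = _
        rw [X_smul_single, h1]

theorem finrank_sHred (j : ℕ) (m : G) :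
    Module.finrank k ↥(sHred k (nablaLex n m) j) =
    Module.finrank k ↥(Submodule.map (denom (chCx k n) j m).mkQ (numer (chCx k n) j m)) := by
  have hD : denom (chCx k n) j m = sBoundaries k (nablaLex n m) j := by
    have hd : ((chCx k n).d j).restrictScalars k = sBoundary k :=
      LinearMap.ext fun z => chD_apply k z
    rw [denom, sBoundaries, hd]
    exact congrArg (Submodule.map (sBoundary k)) (mPart_chGr k n (j + 1) m)
  have hN : numer (chCx k n) j m = sCycles k (nablaLex n m) j := by
    have hm : mPart n ((chCx k n).gr j) m = _ := mPart_chGr k n j m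
    rw [numer, sCycles, hm]
    ext z
    constructor
    · rintro ⟨h1, y, hy, rfl⟩
      refine ⟨h1, ?_⟩
      exact (congrArg (sBoundary k) (chD_apply k y)).trans (sBoundary_sBoundary k _)
    · rintro ⟨h1, h2⟩
      refine ⟨h1, ?_⟩
      have h3 : z ∈ chGr k n j m := mPart_le_gr n _ (chGr_isGr k n j) m (by rwa [mPart_chGr])
      obtain ⟨y, hy, hy2⟩ := fullCh_exact k _ _ z h3 h2
      exact ⟨y, hy, (chD_apply k y).trans hy2⟩
  rw [hD, hN]
  rfl

end ChainModule

section PolySide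

variable {G : Type} [AddCommGroup G] {k : Type} [Field k] {r : ℕ} (n : Fin r → G)

theorem whc_mul (c δ : G) (a b : MvPolynomial (Fin r) k)
    (hb : b ∈ weightedHomogeneousSubmodule k n δ) :
    weightedHomogeneousComponent n c (a * b) = weightedHomogeneousComponent n (c - δ) a * b := by
  classical
  ext α
  rw [coeff_weightedHomogeneousComponent, coeff_mul, coeff_mul]
  split_ifs with h
  · refine Finset.sum_congr rfl fun x hx => ?_
    rw [coeff_weightedHomogeneousComponent]
    by_cases h0 : coeff x.2 b = 0
    · simp [h0]
    · have h1 : Finsupp.weight n x.2 = δ := hb h0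
      rw [if_pos]
      rw [← h, ← Finset.HasAntidiagonal.mem_antidiagonal.1 hx, map_add, h1]
      abel
  · symm
    refine Finset.sum_eq_zero fun x hx => ?_
    rw [coeff_weightedHomogeneousComponent]
    by_cases h0 : coeff x.2 b = 0
    · simp [h0]
    · have h1 : Finsupp.weight n x.2 = δ := hb h0
      rw [if_neg, zero_mul]
      intro h2
      apply h
      rw [← Finset.HasAntidiagonal.mem_antidiagonal.1 hx, map_add, h1, h2]
      abel

/-- Projection on the degree `g` piece. -/
noncomputable def cproj {c : ℕ} (d : Fin c → G) (g : G) :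
    (Fin c → MvPolynomial (Fin r) k) →ₗ[k] (Fin c → MvPolynomial (Fin r) k) :=
  LinearMap.pi fun i => (weightedHomogeneousComponent n (g - d i)) ∘ₗ LinearMap.proj i

theorem cproj_apply {c : ℕ} (d : Fin c → G) (g : G) (q : Fin c → MvPolynomial (Fin r) k)
    (i : Fin c) : cproj n d g q i = weightedHomogeneousComponent n (g - d i) (q i) := rfl

theorem mem_piece {c : ℕ} {d : Fin c → G} {g : G} {q : Fin c → MvPolynomial (Fin r) k} :
    q ∈ shiftedPiece k n d g ↔ ∀ i, q i ∈ weightedHomogeneousSubmodule k n (g - d i) := by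
  simp [shiftedPiece, Submodule.mem_pi]

theorem cproj_mem {c : ℕ} (d : Fin c → G) (g : G) (q : Fin c → MvPolynomial (Fin r) k) :
    cproj n d g q ∈ shiftedPiece k n d g :=
  (mem_piece n).2 fun i => weightedHomogeneousComponent_mem n (q i) (g - d i)

theorem cproj_eq {c : ℕ} {d : Fin c → G} {g : G} {q : Fin c → MvPolynomial (Fin r) k}
    (hq : q ∈ shiftedPiece k n d g) : cproj n d g q = q := by
  funext i
  have h := (mem_piece n).1 hq i
  rw [cproj_apply]
  classical
  ext α
  rw [coeff_weightedHomogeneousComponent]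
  split_ifs with h1
  · rfl
  · by_contra h2
    exact h1 (h (fun h3 => h2 h3.symm))

theorem cproj_smul {c : ℕ} (d : Fin c → G) (g δ : G) (b : MvPolynomial (Fin r) k)
    (hb : b ∈ weightedHomogeneousSubmodule k n δ) (q : Fin c → MvPolynomial (Fin r) k) :
    cproj n d g (b • q) = b • cproj n d (g - δ) q := by
  funext i
  rw [cproj_apply, Pi.smul_apply, Pi.smul_apply, smul_eq_mul, smul_eq_mul, mul_comm,
    whc_mul n _ δ _ _ hb, mul_comm, cproj_apply, sub_right_comm]

theorem lin_apply {R : Type} [CommRing R] {c : ℕ} {M : Type} [AddCommGroup M] [Module R M]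
    (f : (Fin c → R) →ₗ[R] M) (q : Fin c → R) : f q = ∑ e, q e • f (Pi.single e 1) := by
  conv_lhs => rw [pi_eq_sum_univ' q]
  rw [map_sum]
  refine Finset.sum_congr rfl fun e _ => ?_
  rw [map_smul]

theorem cproj_map {c c' : ℕ} (d : Fin c → G) (d' : Fin c' → G)
    (f : (Fin c → MvPolynomial (Fin r) k) →ₗ[MvPolynomial (Fin r) k]
      (Fin c' → MvPolynomial (Fin r) k))
    (hf : ∀ e i, f (Pi.single e 1) i ∈ weightedHomogeneousSubmodule k n (d e - d' i))
    (g : G) (q : Fin c → MvPolynomial (Fin r) k) :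
    cproj n d' g (f q) = f (cproj n d g q) := by
  funext i
  rw [lin_apply f q, lin_apply f (cproj n d g q), cproj_apply, Finset.sum_apply, Finset.sum_apply,
    map_sum]
  refine Finset.sum_congr rfl fun e _ => ?_
  rw [Pi.smul_apply, Pi.smul_apply, smul_eq_mul, smul_eq_mul, whc_mul n _ _ _ _ (hf e i),
    cproj_apply]
  congr 3
  abel

theorem piece_map {c c' : ℕ} (d : Fin c → G) (d' : Fin c' → G)
    (f : (Fin c → MvPolynomial (Fin r) k) →ₗ[MvPolynomial (Fin r) k]
      (Fin c' → MvPolynomial (Fin r) k))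
    (hf : ∀ e i, f (Pi.single e 1) i ∈ weightedHomogeneousSubmodule k n (d e - d' i))
    (g : G) (q : Fin c → MvPolynomial (Fin r) k) (hq : q ∈ shiftedPiece k n d g) :
    f q ∈ shiftedPiece k n d' g := by
  rw [← cproj_eq n hq, ← cproj_map n d d' f hf]
  exact cproj_mem n _ _ _

theorem piece_isGr {c : ℕ} (d : Fin c → G) : IsGr k n (shiftedPiece k n d) := by
  intro a b p x hp hx
  rw [mem_piece] at hx ⊢
  intro i
  have := IsWeightedHomogeneous.mul hp (hx i)
  rw [add_sub_assoc]
  exact this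

theorem piece_proj {c : ℕ} (d : Fin c → G) : GProj k n (shiftedPiece (r := r) k n d) := by
  intro X Y _ _ _ _ _ _ gX hX u v huv
  have hex : ∀ e : Fin c, ∃ x ∈ gX (d e), v x = u (Pi.single e 1) := by
    intro e
    refine huv (d e) _ ((mem_piece n).2 fun i => ?_)
    by_cases h : i = e
    · subst h
      rw [Pi.single_eq_same, sub_self]
      exact isWeightedHomogeneous_one k n
    · rw [Pi.single_eq_of_ne h]
      exact Submodule.zero_mem _
  choose x0 hx0 hx1 using hex
  let f : (Fin c → MvPolynomial (Fin r) k) →ₗ[MvPolynomial (Fin r) k] X :=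
    Fintype.linearCombination (MvPolynomial (Fin r) k) x0
  have hf : ∀ q, f q = ∑ e, q e • x0 e := fun q => Fintype.linearCombination_apply _ _ _
  refine ⟨f, fun g p hp => ⟨?_, ?_⟩⟩
  · rw [hf]
    refine Submodule.sum_mem _ fun e _ => ?_
    have := hX _ _ _ _ ((mem_piece n).1 hp e) (hx0 e)
    rwa [sub_add_cancel] at this
  · rw [hf, map_sum, lin_apply u p]
    exact Finset.sum_congr rfl fun e _ => by rw [map_smul, hx1]

theorem range_graded {c c' : ℕ} (d : Fin c → G) (d' : Fin c' → G)
    (f : (Fin c → MvPolynomial (Fin r) k) →ₗ[MvPolynomial (Fin r) k]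
      (Fin c' → MvPolynomial (Fin r) k))
    (hf : ∀ e i, f (Pi.single e 1) i ∈ weightedHomogeneousSubmodule k n (d e - d' i))
    (g : G) (x) (hx : x ∈ LinearMap.range f) (hx' : x ∈ shiftedPiece k n d' g) :
    ∃ y ∈ shiftedPiece k n d g, f y = x := by
  obtain ⟨q, rfl⟩ := hx
  refine ⟨cproj n d g q, cproj_mem n _ _ _, ?_⟩
  rw [← cproj_map n d d' f hf, cproj_eq n hx']

theorem X_mem_whs (i : Fin r) :
    (MvPolynomial.X i : MvPolynomial (Fin r) k) ∈ weightedHomogeneousSubmodule k n (n i) :=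
  (mem_weightedHomogeneousSubmodule k n _ _).2 (isWeightedHomogeneous_X k n i)

theorem ideal_smul_piece {c : ℕ} (d : Fin c → G)
    (N : Submodule (MvPolynomial (Fin r) k) (Fin c → MvPolynomial (Fin r) k))
    (hN : ∀ g, ∀ w ∈ N, cproj n d g w ∈ N) (g : G) (w)
    (hw : w ∈ Ideal.span (Set.range (X : Fin r → MvPolynomial (Fin r) k)) • N)
    (hw' : w ∈ shiftedPiece k n d g) :
    w ∈ mPart n (fun g => N.restrictScalars k ⊓ shiftedPiece k n d g) g := by
  rw [← cproj_eq n hw']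
  clear hw'
  have key : ∀ p ∈ Ideal.span (Set.range (X : Fin r → MvPolynomial (Fin r) k)), ∀ w ∈ N,
      cproj n d g (p • w) ∈ mPart n (fun g => N.restrictScalars k ⊓ shiftedPiece k n d g) g := by
    intro p hp
    induction hp using Submodule.span_induction with
    | mem x hx =>
      obtain ⟨i, rfl⟩ := hx
      intro w hw
      rw [cproj_smul n d g (n i) _ (X_mem_whs n i)]
      exact Submodule.mem_iSup_of_mem i ⟨_, ⟨hN _ _ hw, cproj_mem n _ _ _⟩, rfl⟩
    | zero => intro w hw; simp
    | add x y _ _ hx hy =>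
      intro w hw
      rw [add_smul, map_add]
      exact Submodule.add_mem _ (hx w hw) (hy w hw)
    | smul a x _ hx =>
      intro w hw
      rw [smul_eq_mul, mul_comm, mul_smul]
      exact hx _ (N.smul_mem a hw)
  refine Submodule.smul_induction_on hw key ?_
  intro x y hx hy
  rw [map_add]
  exact Submodule.add_mem _ hx hy

theorem mPart_le_ideal_smul {c : ℕ} (d : Fin c → G)
    (N : Submodule (MvPolynomial (Fin r) k) (Fin c → MvPolynomial (Fin r) k)) (g : G) :
    mPart n (fun g => N.restrictScalars k ⊓ shiftedPiece k n d g) g ≤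
    (Ideal.span (Set.range (X : Fin r → MvPolynomial (Fin r) k)) • N).restrictScalars k ⊓
      shiftedPiece k n d g := by
  refine iSup_le fun i => ?_
  rintro _ ⟨x, ⟨hx, hx2⟩, rfl⟩
  refine ⟨?_, ?_⟩
  · have h1 : (MvPolynomial.X i : MvPolynomial (Fin r) k) • x ∈
        Ideal.span (Set.range (X : Fin r → MvPolynomial (Fin r) k)) • N :=
      Submodule.smul_mem_smul (Ideal.subset_span ⟨i, rfl⟩) hx
    exact h1
  · have := piece_isGr n d _ _ _ _ (X_mem_whs (k := k) n i) hx2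
    rwa [add_sub_cancel] at this

/-- The complex attached to a graded free resolution. -/
noncomputable def polyCx (s : ℕ → ℕ) (d : ∀ j, Fin (s j) → G)
    (D : ∀ j, (Fin (s (j + 1)) → MvPolynomial (Fin r) k) →ₗ[MvPolynomial (Fin r) k]
      (Fin (s j) → MvPolynomial (Fin r) k))
    (hex : ∀ j, LinearMap.range (D (j + 1)) = LinearMap.ker (D j))
    (hgr : ∀ j e i, D j (Pi.single e 1) i ∈
      weightedHomogeneousSubmodule k n (d (j + 1) e - d j i)) : GCx k n where
  X j := Fin (s j) → MvPolynomial (Fin r) k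
  gr j := shiftedPiece k n (d j)
  d := D
  isGr j := piece_isGr n (d j)
  proj j := piece_proj n (d j)
  d_gr j g x hx := piece_map n _ _ (D j) (hgr j) g x hx
  d_d j g x hx := by
    have : D (j + 1) x ∈ LinearMap.ker (D j) := by rw [← hex]; exact ⟨x, rfl⟩
    exact this
  exact j g x hx h0 := by
    refine range_graded n _ _ (D (j + 1)) (hgr (j + 1)) g x ?_ hx
    rw [hex]; exact h0

section

variable (s : ℕ → ℕ) (d : ∀ j, Fin (s j) → G)
    (D : ∀ j, (Fin (s (j + 1)) → MvPolynomial (Fin r) k) →ₗ[MvPolynomial (Fin r) k]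
      (Fin (s j) → MvPolynomial (Fin r) k))
    (hex : ∀ j, LinearMap.range (D (j + 1)) = LinearMap.ker (D j))
    (hgr : ∀ j e i, D j (Pi.single e 1) i ∈
      weightedHomogeneousSubmodule k n (d (j + 1) e - d j i))

theorem polyCx_numer (j : ℕ)
    (hmin : ∀ e i, D j (Pi.single e 1) i ∈
      Ideal.span (Set.range (X : Fin r → MvPolynomial (Fin r) k))) (m : G) :
    numer (polyCx n s d D hex hgr) j m =
      (LinearMap.range (D j)).restrictScalars k ⊓ shiftedPiece k n (d j) m := by
  apply le_antisymm
  · rintro _ ⟨-, q, hq, rfl⟩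
    exact ⟨⟨q, rfl⟩, piece_map n _ _ (D j) (hgr j) m q hq⟩
  · rintro x ⟨hx, hx2⟩
    obtain ⟨q, hq, rfl⟩ := range_graded n _ _ (D j) (hgr j) m x hx hx2
    refine ⟨?_, q, hq, rfl⟩
    have h1 : D j q ∈ Ideal.span (Set.range (X : Fin r → MvPolynomial (Fin r) k)) •
        (⊤ : Submodule (MvPolynomial (Fin r) k) (Fin (s j) → MvPolynomial (Fin r) k)) := by
      rw [lin_apply (D j) q]
      refine Submodule.sum_mem _ fun e _ => Submodule.smul_mem _ _ ?_
      have h2 := lin_apply (LinearMap.id (R := MvPolynomial (Fin r) k)) (D j (Pi.single e 1))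
      rw [LinearMap.id_apply] at h2
      rw [h2]
      exact Submodule.sum_mem _ fun i _ => Submodule.smul_mem_smul (hmin e i) Submodule.mem_top
    have h2 := ideal_smul_piece n (d j) ⊤ (fun _ _ _ => Submodule.mem_top) m _ h1 hx2
    have h3 : mPart n (fun g => (⊤ : Submodule (MvPolynomial (Fin r) k)
        (Fin (s j) → MvPolynomial (Fin r) k)).restrictScalars k ⊓ shiftedPiece k n (d j) g) m ≤
        mPart n (shiftedPiece k n (d j)) m :=
      iSup_mono fun i => Submodule.map_mono inf_le_right
    exact h3 h2

theorem polyCx_denom (j : ℕ) (m : G) :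
    denom (polyCx n s d D hex hgr) j m =
      (Ideal.span (Set.range (X : Fin r → MvPolynomial (Fin r) k)) •
        LinearMap.range (D j)).restrictScalars k ⊓ shiftedPiece k n (d j) m := by
  apply le_antisymm
  · rintro _ ⟨q, hq, rfl⟩
    apply mPart_le_ideal_smul
    exact mPart_map n _ (fun g => (LinearMap.range (D j)).restrictScalars k ⊓
      shiftedPiece k n (d j) g) (D j)
      (fun g x hx => ⟨⟨x, rfl⟩, piece_map n _ _ (D j) (hgr j) g x hx⟩) m _ hq
  · rintro x ⟨hx, hx2⟩
    have h1 := ideal_smul_piece n (d j) (LinearMap.range (D j)) (by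
      rintro g _ ⟨q, rfl⟩
      rw [cproj_map n _ _ (D j) (hgr j)]
      exact ⟨_, rfl⟩) m x hx hx2
    revert h1
    suffices mPart n (fun g => (LinearMap.range (D j)).restrictScalars k ⊓
      shiftedPiece k n (d j) g) m ≤ denom (polyCx n s d D hex hgr) j m from fun h => this h
    refine iSup_le fun i => ?_
    rintro _ ⟨y, ⟨hy, hy2⟩, rfl⟩
    obtain ⟨q, hq, rfl⟩ := range_graded n _ _ (D j) (hgr j) _ y hy hy2
    refine ⟨(MvPolynomial.X i : MvPolynomial (Fin r) k) • q,
      Submodule.mem_iSup_of_mem i ⟨q, hq, rfl⟩, ?_⟩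
    exact map_smul (D j) _ q

end

end PolySide

section Base

variable {G : Type} [AddCommGroup G] {k : Type} [Field k] {r : ℕ} (n : Fin r → G)

theorem trSet_singleton_zero (α : Fin r →₀ ℕ) :
    trSet α ({0} : MSet r) = {toLex α} := by
  ext b; simp [mem_trSet, eq_comm]

theorem smul_pt (p : MvPolynomial (Fin r) k) :
    p • (Finsupp.single ({0} : MSet r) (1 : k)) =
      ∑ α ∈ p.support, Finsupp.single ({toLex α} : MSet r) (coeff α p) := by
  conv_lhs => rw [p.as_sum, Finset.sum_smul]
  exact Finset.sum_congr rfl fun α _ => by rw [monomial_smul_single, trSet_singleton_zero]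

theorem smul_pt_apply (p : MvPolynomial (Fin r) k) (α : Fin r →₀ ℕ) :
    (p • (Finsupp.single ({0} : MSet r) (1 : k))) {toLex α} = coeff α p := by
  classical
  rw [smul_pt, Finsupp.finsetSum_apply]
  simp only [Finsupp.single_apply, Finset.singleton_inj, EmbeddingLike.apply_eq_iff_eq]
  rw [Finset.sum_ite_eq']
  split_ifs with h
  · rfl
  · exact (notMem_support_iff.1 h).symm

theorem smul_empty (p : MvPolynomial (Fin r) k) :
    p • (Finsupp.single (∅ : MSet r) (1 : k)) =
      Finsupp.single (∅ : MSet r) (∑ α ∈ p.support, coeff α p) := by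
  conv_lhs => rw [p.as_sum, Finset.sum_smul]
  rw [Finsupp.single_finsetSum]
  exact Finset.sum_congr rfl fun α _ => by rw [monomial_smul_single]; simp [trSet]

theorem sBoundary_smul_pt (p : MvPolynomial (Fin r) k) :
    sBoundary k (p • (Finsupp.single ({0} : MSet r) (1 : k))) =
      Finsupp.single (∅ : MSet r) (∑ α ∈ p.support, coeff α p) := by
  rw [← chD_apply, map_smul, chD_apply, sBoundary_single, ← smul_empty]
  simp [Finset.filter_singleton]

variable (S : AddSubmonoid G) (hmem : ∀ i, n i ∈ S)

theorem toric_monomial (α : Fin r →₀ ℕ) : ∃ t : S, (t : G) = Finsupp.weight n α ∧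
    MvPolynomial.aeval
        (fun i : Fin r => AddMonoidAlgebra.single (⟨n i, hmem i⟩ : S) (1 : k))
        (monomial α (1 : k)) = AddMonoidAlgebra.single t (1 : k) := by
  induction α using Finsupp.induction_linear with
  | zero => exact ⟨0, by simp, by
      have h1 : (monomial 0 (1 : k) : MvPolynomial (Fin r) k) = 1 := rfl
      rw [h1, map_one, AddMonoidAlgebra.one_def]⟩
  | add α β hα hβ =>
    obtain ⟨t, h1, h2⟩ := hα
    obtain ⟨t', h1', h2'⟩ := hβ
    refine ⟨t + t', by simp [h1, h1'], ?_⟩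
    have : (monomial (α + β) (1 : k) : MvPolynomial (Fin r) k) = monomial α 1 * monomial β 1 := by
      rw [monomial_mul, one_mul]
    rw [this, map_mul, h2, h2', AddMonoidAlgebra.single_mul_single, one_mul]
  | single i e =>
    refine ⟨e • ⟨n i, hmem i⟩, by simp [Finsupp.weight_apply], ?_⟩
    rw [← X_pow_eq_monomial, map_pow, aeval_X, AddMonoidAlgebra.single_pow, one_pow]

theorem toric_sum (p : MvPolynomial (Fin r) k)
    (hp : MvPolynomial.aeval
        (fun i : Fin r => AddMonoidAlgebra.single (⟨n i, hmem i⟩ : S) (1 : k)) p = 0) :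
    ∑ α ∈ p.support, coeff α p = 0 := by
  let ε : AddMonoidAlgebra k S →ₐ[k] k := AddMonoidAlgebra.lift k k S 1
  have h1 : ε.comp (MvPolynomial.aeval
        (fun i : Fin r => AddMonoidAlgebra.single (⟨n i, hmem i⟩ : S) (1 : k))) =
      MvPolynomial.aeval (fun _ => (1 : k)) := by
    apply MvPolynomial.algHom_ext
    intro i
    simp [ε]
  have h2 := DFunLike.congr_fun h1 p
  rw [AlgHom.comp_apply, hp, map_zero, aeval_def, eval₂_eq] at h2
  simpa using h2.symm

theorem toric_of_sum (g : G) (p : MvPolynomial (Fin r) k)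
    (hg : p ∈ weightedHomogeneousSubmodule k n g)
    (hp : ∑ α ∈ p.support, coeff α p = 0) :
    MvPolynomial.aeval
        (fun i : Fin r => AddMonoidAlgebra.single (⟨n i, hmem i⟩ : S) (1 : k)) p = 0 := by
  by_cases h0 : p = 0
  · simp [h0]
  obtain ⟨β, hβ⟩ := MvPolynomial.ne_zero_iff.1 h0
  obtain ⟨t, ht, -⟩ := toric_monomial (k := k) n S hmem β
  have hβ' : Finsupp.weight n β = g := hg hβ
  rw [p.as_sum, map_sum]
  have : ∀ α ∈ p.support, MvPolynomial.aeval
        (fun i : Fin r => AddMonoidAlgebra.single (⟨n i, hmem i⟩ : S) (1 : k))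
        (monomial α (coeff α p)) = coeff α p • AddMonoidAlgebra.single t (1 : k) := by
    intro α hα
    have hα' : Finsupp.weight n α = g := hg (mem_support_iff.1 hα)
    obtain ⟨t', ht', h2⟩ := toric_monomial (k := k) n S hmem α
    obtain rfl : t = t' := Subtype.ext (by rw [ht, ht', hα', hβ'])
    rw [← h2, ← map_smul, smul_monomial, smul_eq_mul, mul_one]
  rw [Finset.sum_congr rfl this, ← Finset.sum_smul, hp, zero_smul]

end Base

section Aug

variable {G : Type} [AddCommGroup G] {k : Type} [Field k] {r : ℕ} (n : Fin r → G)

/-- ranks of the resolution including `R` itself -/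
def sAug (s : ℕ → ℕ) : ℕ → ℕ
  | 0 => 1
  | j + 1 => s (j + 1)

/-- shifts of the resolution including `R` itself -/
def dAug (s : ℕ → ℕ) (d : ∀ j, Fin (s j) → G) : ∀ j, Fin (sAug s j) → G
  | 0 => fun _ => 0
  | j + 1 => d (j + 1)

/-- differentials of the resolution including `R` itself -/
noncomputable def DAug (s : ℕ → ℕ)
    (π : (Fin (s 1) → MvPolynomial (Fin r) k) →ₗ[MvPolynomial (Fin r) k]
          MvPolynomial (Fin r) k)
    (φ : ∀ j, (Fin (s (j + 2)) → MvPolynomial (Fin r) k) →ₗ[MvPolynomial (Fin r) k]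
          (Fin (s (j + 1)) → MvPolynomial (Fin r) k)) :
    ∀ j, (Fin (sAug s (j + 1)) → MvPolynomial (Fin r) k) →ₗ[MvPolynomial (Fin r) k]
      (Fin (sAug s j) → MvPolynomial (Fin r) k)
  | 0 => LinearMap.pi (fun _ : Fin 1 => π)
  | j + 1 => φ j

theorem level_zero (S : AddSubmonoid G) (hmem : ∀ i, n i ∈ S)
    (s : ℕ → ℕ) (d : ∀ j, Fin (s j) → G)
    (π : (Fin (s 1) → MvPolynomial (Fin r) k) →ₗ[MvPolynomial (Fin r) k]
          MvPolynomial (Fin r) k)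
    (φ : ∀ j, (Fin (s (j + 2)) → MvPolynomial (Fin r) k) →ₗ[MvPolynomial (Fin r) k]
          (Fin (s (j + 1)) → MvPolynomial (Fin r) k))
    (hπ : ∀ p, p ∈ LinearMap.range π ↔ MvPolynomial.aeval
        (fun i : Fin r => AddMonoidAlgebra.single (⟨n i, hmem i⟩ : S) (1 : k)) p = 0)
    (hex : ∀ j, LinearMap.range (DAug s π φ (j + 1)) = LinearMap.ker (DAug s π φ j))
    (hgr : ∀ j e i, DAug s π φ j (Pi.single e 1) i ∈
      weightedHomogeneousSubmodule k n (dAug s d (j + 1) e - dAug s d j i)) :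
    Level (polyCx n (sAug s) (dAug s d) (DAug s π φ) hex hgr) (chCx k n) 0 := by
  let f : (Fin 1 → MvPolynomial (Fin r) k) →ₗ[MvPolynomial (Fin r) k] (MSet r →₀ k) :=
    (LinearMap.toSpanSingleton (MvPolynomial (Fin r) k) (MSet r →₀ k)
      (Finsupp.single ({0} : MSet r) (1 : k))) ∘ₗ LinearMap.proj 0
  have hf : ∀ w, f w = w 0 • (Finsupp.single ({0} : MSet r) (1 : k)) := fun w => rfl
  have hinj : Function.Injective f := by
    intro w w' h
    funext i
    obtain rfl : i = 0 := Subsingleton.elim _ _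
    ext α
    rw [← smul_pt_apply, ← smul_pt_apply, ← hf, ← hf, h]
  have hfgr : ∀ e, ∀ x ∈ shiftedPiece k n (fun _ : Fin 1 => (0 : G)) e, f x ∈ chGr k n 0 e := by
    intro e x hx
    have h1 := (mem_piece n).1 hx 0
    have h2 := chGr_isGr k n 0 (e - 0) 0 (x 0) (Finsupp.single ({0} : MSet r) (1 : k)) h1
      (Finsupp.single_mem_supported _ _ ⟨by simp, by
        intro a ha
        rw [Finset.mem_singleton.1 ha]
        change Finsupp.weight n (ofLex (0 : Lex (Fin r →₀ ℕ))) = 0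
        rw [ofLex_zero, map_zero]⟩)
    rwa [sub_zero, add_zero] at h2
  obtain ⟨g, hg⟩ := chGr_proj k n 0 (Fin 1 → MvPolynomial (Fin r) k) (MSet r →₀ k)
    (shiftedPiece k n (fun _ : Fin 1 => (0 : G))) (piece_isGr n _) LinearMap.id f (by
      intro e p hp
      refine supported_ind k _ (Submodule.map (f.restrictScalars k)
        (shiftedPiece k n (fun _ : Fin 1 => (0 : G)) e)) ?_ hp
      rintro F ⟨hF, hF2⟩
      obtain ⟨a, rfl⟩ := Finset.card_eq_one.1 hF
      refine ⟨fun _ => monomial (ofLex a) 1, (mem_piece n).2 fun i => ?_, ?_⟩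
      · rw [sub_zero]
        exact isWeightedHomogeneous_monomial n _ _ (hF2 a (Finset.mem_singleton_self a))
      · change (monomial (ofLex a) (1 : k) : MvPolynomial (Fin r) k) •
          (Finsupp.single ({0} : MSet r) (1 : k) : MSet r →₀ k) =
            Finsupp.single ({a} : MSet r) (1 : k)
        rw [monomial_smul_single, trSet_singleton_zero, toLex_ofLex])
  have hb : ∀ q : Fin (s 1) → MvPolynomial (Fin r) k, sBoundary k (f (fun _ => π q)) = 0 :=
    fun q => by
      rw [hf, sBoundary_smul_pt, toric_sum n S hmem _ ((hπ _).1 ⟨q, rfl⟩), Finsupp.single_zero]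
  refine ⟨f, g, 0, 0, hfgr, fun e x hx => (hg e x hx).1, fun e x hx => Submodule.zero_mem _,
    fun e x hx => Submodule.zero_mem _, fun e x hx => ?_, fun e x hx => ?_, fun e x hx => ?_,
    fun e x hx => ?_⟩
  · have hx2 := (polyCx n (sAug s) (dAug s d) (DAug s π φ) hex hgr).d_gr 0 e x hx
    have h1 := hfgr e _ hx2
    have h0 : sBoundary k (f (DAug s π φ 0 x)) = 0 := hb x
    obtain ⟨y, hy, hy2⟩ := fullCh_exact k _ _ _ h1 h0
    exact ⟨y, hy, (chD_apply k y).trans hy2⟩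
  · have hx2 := (chCx k n).d_gr 0 e x hx
    obtain ⟨h1, h2⟩ := hg e _ hx2
    set w := g (chD k r x) with hw
    have h2' : f w = chD k r x := h2
    have h3 : sBoundary k (f w) = 0 :=
      (congrArg (sBoundary k) (h2'.trans (chD_apply k x))).trans (sBoundary_sBoundary k _)
    rw [hf, sBoundary_smul_pt, Finsupp.single_eq_zero] at h3
    have h4 : w 0 ∈ LinearMap.range π :=
      (hπ _).2 (toric_of_sum n S hmem _ _ ((mem_piece n).1 h1 0) h3)
    obtain ⟨q, hq⟩ := h4
    refine range_graded n (dAug s d 1) (dAug s d 0) (DAug s π φ 0) (hgr 0) e w ⟨q, ?_⟩ h1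
    funext i
    obtain rfl : i = (0 : Fin 1) := Subsingleton.elim (α := Fin 1) _ _
    exact hq
  · have hx2 := (polyCx n (sAug s) (dAug s d) (DAug s π φ) hex hgr).d_gr 0 e x hx
    have h1 := hg e _ (hfgr e _ hx2)
    have h2 : g (f (DAug s π φ 0 x)) = DAug s π φ 0 x := hinj h1.2
    refine (map_zero _).trans ?_
    exact (sub_eq_zero.2 h2).symm
  · have hx2 := (chCx k n).d_gr 0 e x hx
    refine (map_zero _).trans ?_
    exact (sub_eq_zero.2 (hg e _ hx2).2).symm

end Aug

/-- Given a minimal `S`-graded free resolution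
`… → R^{s_{j+1}} → R^{s_j} → … → R^{s_1} → R → k[S] → 0` of the monoid algebra, with
`N_0 = I_S` and `N_j = ker φ_j` the `j`-th syzygy module, for every `m ∈ S` and every
`j ≥ 0` the dimension over `k` of the reduced homology `H̃_j(∇_m)` equals the multigraded
Betti number `dim_k (N_j)_m/(𝔪 N_j)_m`. -/
theorem homology_nabla_computes_betti
    {G : Type} [AddCommGroup G] (k : Type) [Field k]
    (S : AddSubmonoid G) (hFG : S.FG) (hcf : ∀ g ∈ S, -g ∈ S → g = 0)
    {r : ℕ} (n : Fin r → G) (hn : ∀ i, n i ≠ 0)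
    (hgen : S = AddSubmonoid.closure (Set.range n)) (hmem : ∀ i, n i ∈ S)
    -- the toric ideal and the irrelevant ideal
    (IS : Ideal (MvPolynomial (Fin r) k))
    (hIS : IS = RingHom.ker (MvPolynomial.aeval
        (fun i : Fin r => AddMonoidAlgebra.single (⟨n i, hmem i⟩ : S) (1 : k)) :
          MvPolynomial (Fin r) k →ₐ[k] AddMonoidAlgebra k S).toRingHom)
    (mIdeal : Ideal (MvPolynomial (Fin r) k))
    (hmIdeal : mIdeal = Ideal.span (Set.range (X : Fin r → MvPolynomial (Fin r) k)))
    -- a minimal S-graded free resolution: ranks, degree shifts and differentials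
    (s : ℕ → ℕ) (d : ∀ j, Fin (s j) → G)
    (π : (Fin (s 1) → MvPolynomial (Fin r) k) →ₗ[MvPolynomial (Fin r) k]
          MvPolynomial (Fin r) k)
    (φ : ∀ j, (Fin (s (j + 2)) → MvPolynomial (Fin r) k) →ₗ[MvPolynomial (Fin r) k]
          (Fin (s (j + 1)) → MvPolynomial (Fin r) k))
    -- N₀ = I_S and exactness
    (hπrange : LinearMap.range π = IS)
    (hexact0 : LinearMap.range (φ 0) = LinearMap.ker π)
    (hexact : ∀ j, LinearMap.range (φ (j + 1)) = LinearMap.ker (φ j))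
    -- minimality: all matrix entries lie in 𝔪
    (hminπ : ∀ e, π (Pi.single e 1) ∈ mIdeal)
    (hminφ : ∀ j e i, φ j (Pi.single e 1) i ∈ mIdeal)
    -- the differentials are S-graded for the degree shifts d
    (hgrπ : ∀ e, π (Pi.single e 1) ∈ weightedHomogeneousSubmodule k n (d 1 e))
    (hgrφ : ∀ j e i, φ j (Pi.single e 1) i ∈
      weightedHomogeneousSubmodule k n (d (j + 2) e - d (j + 1) i)) :
    ∀ m ∈ S,
      -- j = 0 : N₀ = I_S
      (Module.finrank k ↥(sHred k (nablaLex n m) 0) =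
        Module.finrank k ↥(Submodule.map
          (((mIdeal * IS).restrictScalars k ⊓ weightedHomogeneousSubmodule k n m).mkQ)
          (IS.restrictScalars k ⊓ weightedHomogeneousSubmodule k n m))) ∧
      -- j = 1 : N₁ = ker π ⊆ R^{s 1}
      (Module.finrank k ↥(sHred k (nablaLex n m) 1) =
        multigradedBetti k n (d 1) m (LinearMap.ker π)) ∧
      -- j ≥ 2 : N_{j+2} = ker (φ j) ⊆ R^{s (j+2)}
      (∀ j : ℕ, Module.finrank k ↥(sHred k (nablaLex n m) (j + 2)) =
        multigradedBetti k n (d (j + 2)) m (LinearMap.ker (φ j))) := by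
  subst hmIdeal
  have hex : ∀ j, LinearMap.range (DAug s π φ (j + 1)) = LinearMap.ker (DAug s π φ j) := by
    intro j
    cases j with
    | zero =>
      refine hexact0.trans ?_
      ext q
      constructor
      · intro h
        exact funext fun _ => h
      · intro h
        exact congrFun h (0 : Fin 1)
    | succ j => exact hexact j
  have hgr : ∀ j e i, DAug s π φ j (Pi.single e 1) i ∈
      weightedHomogeneousSubmodule k n (dAug s d (j + 1) e - dAug s d j i) := by
    intro j
    cases j with
    | zero =>
      intro e i
      have := hgrπ e
      rw [← sub_zero (d 1 e)] at this
      exact this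
    | succ j => exact hgrφ j
  have hmin : ∀ j e i, DAug s π φ j (Pi.single e 1) i ∈
      Ideal.span (Set.range (X : Fin r → MvPolynomial (Fin r) k)) := by
    intro j
    cases j with
    | zero => exact fun e i => hminπ e
    | succ j => exact hminφ j
  have hL := level_zero n S hmem s d π φ (by
    intro p
    rw [hπrange, hIS]
    exact Iff.rfl) hex hgr
  intro m hm
  have main : ∀ j, Module.finrank k ↥(sHred k (nablaLex n m) j) =
      Module.finrank k ↥(Submodule.map
        (((Ideal.span (Set.range (X : Fin r → MvPolynomial (Fin r) k)) •
          LinearMap.range (DAug s π φ j)).restrictScalars k ⊓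
            shiftedPiece k n (dAug s d j) m).mkQ)
        ((LinearMap.range (DAug s π φ j)).restrictScalars k ⊓
          shiftedPiece k n (dAug s d j) m)) := by
    intro j
    rw [finrank_sHred, ← finrank_eq_of_level_zero _ _ hL j m,
      ← polyCx_denom n _ _ _ hex hgr j m, ← polyCx_numer n _ _ _ hex hgr j (hmin j) m]
    rfl
  refine ⟨?_, ?_, ?_⟩
  · rw [main 0]
    let E : MvPolynomial (Fin r) k ≃ₗ[MvPolynomial (Fin r) k]
        (Fin 1 → MvPolynomial (Fin r) k) :=
      (LinearEquiv.funUnique (Fin 1) (MvPolynomial (Fin r) k) (MvPolynomial (Fin r) k)).symm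
    have hEi : ∀ w : Fin 1 → MvPolynomial (Fin r) k, E (w 0) = w := fun w =>
      funext fun i => by
        obtain rfl : i = 0 := Subsingleton.elim _ _
        rfl
    have hr : LinearMap.range (DAug s π φ 0) = Submodule.map E.toLinearMap IS := by
      ext w
      rw [← hπrange]
      constructor
      · rintro ⟨q, rfl⟩
        exact ⟨π q, ⟨q, rfl⟩, rfl⟩
      · rintro ⟨_, ⟨q, rfl⟩, rfl⟩
        exact ⟨q, rfl⟩
    have hsm : Ideal.span (Set.range (X : Fin r → MvPolynomial (Fin r) k)) •
        LinearMap.range (DAug s π φ 0) = Submodule.map E.toLinearMap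
          (Ideal.span (Set.range (X : Fin r → MvPolynomial (Fin r) k)) * IS) := by
      rw [hr]
      exact (Submodule.map_smul'' _ _ _).symm
    have hpc : ∀ p : MvPolynomial (Fin r) k, E p ∈ shiftedPiece k n (dAug s d 0) m ↔
        p ∈ weightedHomogeneousSubmodule k n m := by
      intro p
      refine (mem_piece n).trans ?_
      constructor
      · intro h
        have := h (0 : Fin 1)
        change p ∈ weightedHomogeneousSubmodule k n (m - 0) at this
        rwa [sub_zero] at this
      · intro h i
        change p ∈ weightedHomogeneousSubmodule k n (m - 0)
        rwa [sub_zero]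
    rw [hsm, hr]
    refine (finrank_subquot_eq _ _ _ _ (E.toLinearMap.restrictScalars k)
      (E.symm.toLinearMap.restrictScalars k) ?_ ?_ ?_ ?_ ?_ ?_).symm
    · rintro v ⟨h1, h2⟩
      exact ⟨⟨v, h1, rfl⟩, (hpc v).2 h2⟩
    · rintro _ ⟨⟨v, h1, rfl⟩, h2⟩
      exact ⟨h1, (hpc v).1 h2⟩
    · rintro v ⟨h1, h2⟩
      exact ⟨⟨v, h1, rfl⟩, (hpc v).2 h2⟩
    · rintro _ ⟨⟨v, h1, rfl⟩, h2⟩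
      exact ⟨h1, (hpc v).1 h2⟩
    · intro v _
      have : E.symm (E v) - v = 0 := by rw [E.symm_apply_apply, sub_self]
      change E.symm (E v) - v ∈ _
      rw [this]
      exact Submodule.zero_mem _
    · intro v _
      have : E (E.symm v) - v = 0 := by rw [E.apply_symm_apply, sub_self]
      change E (E.symm v) - v ∈ _
      rw [this]
      exact Submodule.zero_mem _
  · rw [main 1, multigradedBetti, ← hexact0]
    rfl
  · intro j
    rw [main (j + 2), multigradedBetti, ← hexact]
    rfl
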